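/- arXiv:2006.10628 — 3 statements merged into one kernel-verified Lean document; each statement's English description precedes it below -/
import Mathlib

section
/- (Lemma 3, general form: maximal inequality on an event for a finite family with uniformly bounded log-moment generating functions.) Let {Z_i}_{i ∈ I} be a finite nonempty family of real-valued random variables on a probability space, let 0 < b ≤ ∞, and let ψ be a convex, continuously differentiable function on [0,b) with ψ(0) = ψ'(0) = 0. Assume that for every γ ∈ (0,b) and every i ∈ I, log E[ e^{γ Z_i} ] ≤ ψ(γ). Define the Legendre transform ψ*(x) := sup_{γ ∈ (0,b)} ( γ x − ψ(γ) ) and its generalized inverse ψ*^{-1}(u) := inf{ x ≥ 0 : ψ*(x) > u }. Then for every measurable event B with P(B) > 0: E[ (sup_{i ∈ I} Z_i) · 1_B ] / P(B) ≤ ψ*^{-1}( log( |I| / P(B) ) ). -/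
/-!
Exponential-moment (Chernoff-type) argument. Write `S = sup_i Z_i`, `p = P(B)`, and for an
admissible `γ` put `L = log (|I| / p) + ψ γ`. Integrate over `B` the pointwise inequality
`γ S - L + 1 ≤ e^(γ S - L) ≤ e^(-L) ∑ i, e^(γ Z_i)`. The integral of its right-hand side is at most
`e^(-L) |I| e^(ψ γ) = p`, so that `γ E[S 1_B] ≤ L p` (`mul_setIntegral_iSup_le`). If `log (|I| / p) < γ x - ψ γ`, then
`L < γ x`, hence `E[S 1_B] / p ≤ x`; taking the infimum over such `x` concludes.

Two conventions matter. The set of such `x` is nonempty, so its `sInf` is a true infimum. If `S` is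
not integrable on `B`, the Bochner integral is `0`, and the claim holds because the set consists
of nonnegative reals.
-/

open MeasureTheory ProbabilityTheory ENNReal

/-- The bound at a fixed exponent `γ`; it is Jensen's inequality for `exp` on `B`, obtained from the
tangent line inequality `t + 1 ≤ exp t`. -/
theorem mul_setIntegral_iSup_le {Ω : Type} [MeasurableSpace Ω] (P : Measure Ω)
    [IsProbabilityMeasure P] {I : Type} [Fintype I] [Nonempty I] (Z : I → Ω → ℝ) (γ c : ℝ)
    (hmgf : ∀ i, Integrable (fun ω => Real.exp (γ * Z i ω)) P ∧
      Real.log (∫ ω, Real.exp (γ * Z i ω) ∂P) ≤ c)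
    (B : Set Ω) (hBpos : 0 < (P B).toReal)
    (hS : Integrable (fun ω => ⨆ i, Z i ω) (P.restrict B)) :
    γ * ∫ ω in B, (⨆ i, Z i ω) ∂P
      ≤ (Real.log ((Fintype.card I : ℝ) / (P B).toReal) + c) * (P B).toReal := by
  set p := (P B).toReal with hp
  set L := Real.log ((Fintype.card I : ℝ) / p) + c with hL
  have hcard : (0 : ℝ) < Fintype.card I := by exact_mod_cast Fintype.card_pos
  have hsum : Integrable (fun ω => ∑ i, Real.exp (γ * Z i ω)) P :=
    integrable_finsetSum _ fun i _ => (hmgf i).1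
  have hpt : ∀ ω, γ * (⨆ i, Z i ω) - (L - 1)
      ≤ Real.exp (-L) * ∑ i, Real.exp (γ * Z i ω) := by
    intro ω
    obtain ⟨j, hj⟩ := exists_eq_ciSup_of_finite (f := fun i => Z i ω)
    rw [← hj]
    have h1 := Real.add_one_le_exp (-L + γ * Z j ω)
    have h2 : Real.exp (γ * Z j ω) ≤ ∑ i, Real.exp (γ * Z i ω) :=
      Finset.single_le_sum (f := fun i => Real.exp (γ * Z i ω))
        (fun i _ => (Real.exp_pos _).le) (Finset.mem_univ j)
    have h3 := mul_le_mul_of_nonneg_left h2 (Real.exp_pos (-L)).le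
    rw [Real.exp_add] at h1
    linarith
  have hint : γ * (∫ ω in B, (⨆ i, Z i ω) ∂P) - (L - 1) * p
      ≤ Real.exp (-L) * ∫ ω in B, ∑ i, Real.exp (γ * Z i ω) ∂P := by
    have h := integral_mono ((hS.const_mul γ).sub (integrable_const (L - 1)))
      ((hsum.restrict (s := B)).const_mul (Real.exp (-L))) hpt
    simp only [Pi.sub_apply] at h
    rw [integral_sub (hS.const_mul γ) (integrable_const _), integral_const_mul,
      integral_const_mul, setIntegral_const, smul_eq_mul, mul_comm (P.real B)] at h
    exact h
  have hle : ∫ ω in B, ∑ i, Real.exp (γ * Z i ω) ∂P ≤ Fintype.card I * Real.exp c := by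
    calc ∫ ω in B, ∑ i, Real.exp (γ * Z i ω) ∂P
        ≤ ∫ ω, ∑ i, Real.exp (γ * Z i ω) ∂P :=
          setIntegral_le_integral hsum
            (Filter.Eventually.of_forall fun ω => Finset.sum_nonneg fun i _ => (Real.exp_pos _).le)
      _ = ∑ i, ∫ ω, Real.exp (γ * Z i ω) ∂P := integral_finsetSum _ fun i _ => (hmgf i).1
      _ ≤ ∑ _i : I, Real.exp c := Finset.sum_le_sum fun i _ =>
          (Real.le_exp_log _).trans (Real.exp_le_exp.2 (hmgf i).2)
      _ = Fintype.card I * Real.exp c := by simp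
  have hexp : Real.exp (-L) * (Fintype.card I * Real.exp c) = p := by
    rw [hL, neg_add, Real.exp_add, Real.exp_neg, Real.exp_neg, Real.exp_log (by positivity)]
    field_simp
  have := mul_le_mul_of_nonneg_left hle (Real.exp_pos (-L)).le
  linarith

/-- **Lemma 3 (general form)**: maximal inequality on an event for a finite family of
real random variables with uniformly bounded log-moment generating functions.
`ψ` is convex and continuously differentiable on `[0, b)` (with `0 < b ≤ ∞`),
`ψ(0) = ψ'(0) = 0`, and `log E[e^{γ Z_i}] ≤ ψ(γ)` for all `γ ∈ (0, b)`.  Then for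
every event `B` with `P(B) > 0`,
`E[(sup_i Z_i) 1_B] / P(B) ≤ ψ*⁻¹(log(|I| / P(B)))`,
where `ψ*(x) = sup_{γ ∈ (0,b)} (γ x - ψ(γ))` and
`ψ*⁻¹(u) = inf {x ≥ 0 : ψ*(x) > u}`; the condition `ψ*(x) > u` is expressed as
`∃ γ ∈ (0,b), u < γ x - ψ(γ)`. -/
theorem stmt11 (Ω : Type) [MeasurableSpace Ω] (P : Measure Ω) [IsProbabilityMeasure P]
    (I : Type) [Fintype I] [Nonempty I]
    (Z : I → Ω → ℝ) (hZmeas : ∀ i, Measurable (Z i))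
    (b : ℝ≥0∞) (hb : 0 < b)
    (ψ ψ' : ℝ → ℝ)
    (hconv : ConvexOn ℝ {x : ℝ | 0 ≤ x ∧ ENNReal.ofReal x < b} ψ)
    (hderiv : ∀ x : ℝ, 0 ≤ x → ENNReal.ofReal x < b →
      HasDerivWithinAt ψ (ψ' x) {y : ℝ | 0 ≤ y ∧ ENNReal.ofReal y < b} x)
    (hcont : ContinuousOn ψ' {x : ℝ | 0 ≤ x ∧ ENNReal.ofReal x < b})
    (hψ0 : ψ 0 = 0) (hψ'0 : ψ' 0 = 0)
    (hmgf : ∀ i, ∀ γ : ℝ, 0 < γ → ENNReal.ofReal γ < b →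
      Integrable (fun ω => Real.exp (γ * Z i ω)) P ∧
        Real.log (∫ ω, Real.exp (γ * Z i ω) ∂P) ≤ ψ γ)
    (B : Set Ω) (hB : MeasurableSet B) (hBpos : 0 < P B) :
    (∫ ω in B, (⨆ i, Z i ω) ∂P) / (P B).toReal
      ≤ sInf {x : ℝ | 0 ≤ x ∧ ∃ γ : ℝ, 0 < γ ∧ ENNReal.ofReal γ < b ∧
          Real.log ((Fintype.card I : ℝ) / (P B).toReal) < γ * x - ψ γ} := by
  have hp : 0 < (P B).toReal := ENNReal.toReal_pos hBpos.ne' (measure_ne_top P B)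
  by_cases hS : Integrable (fun ω => ⨆ i, Z i ω) (P.restrict B)
  · refine le_csInf ?_ ?_
    · obtain ⟨γ, hγ, hγb⟩ : ∃ γ : ℝ, 0 < γ ∧ ENNReal.ofReal γ < b := by
        obtain ⟨r, hr, hrb⟩ := ENNReal.lt_iff_exists_nnreal_btwn.1 hb
        exact ⟨r, by exact_mod_cast hr, by simpa using hrb⟩
      -- At such a `γ`, any `x` with `γ * x > log (|I| / p) + ψ γ` belongs to the set.
      set a := Real.log ((Fintype.card I : ℝ) / (P B).toReal)
      refine ⟨(|a + ψ γ| + 1) / γ, by positivity, γ, hγ, hγb, ?_⟩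
      rw [mul_div_cancel₀ _ hγ.ne']
      linarith [le_abs_self (a + ψ γ)]
    · rintro x ⟨-, γ, hγ, hγb, hx⟩
      have h := mul_setIntegral_iSup_le P Z γ (ψ γ) (fun i => hmgf i γ hγ hγb) B hp hS
      rw [div_le_iff₀ hp]
      refine le_of_mul_le_mul_left (h.trans ?_) hγ
      rw [← mul_assoc]
      exact mul_le_mul_of_nonneg_right (by linarith) hp.le
  · rw [integral_undef hS, zero_div]
    exact Real.sInf_nonneg fun x hx => hx.1
end

section
/- (Lemma 3, sub-Gaussian corollary: maximal inequality on an event for sub-Gaussian variables.) Let {Z_i}_{i ∈ I} be a finite nonempty family of real-valued random variables on a probability space, and let ε ≥ 0 be such that log E[ e^{γ Z_i} ] ≤ γ² ε² / 2 for all γ > 0 and all i ∈ I. Then for every measurable event B with P(B) > 0: E[ (sup_{i ∈ I} Z_i) · 1_B ] / P(B) ≤ ε √( 2 log( |I| / P(B) ) ) ≤ ε √( 2 log |I| ) + ε √( 2 log( 1/P(B) ) ). -/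
/-!
Write `p = P(B)`, `M = sup_i Z_i` and `L = log (|I| / p)`. For fixed `γ` the tangent line of `exp`
at `c = L + γ² ε² / 2` gives `exp c * (1 + γ M - c) ≤ exp (γ M) ≤ ∑ i, exp (γ Z_i)`. Integrating over
`B` and bounding each exponential moment by `exp (γ² ε² / 2)`, the right side is at most
`|I| exp (γ² ε² / 2) = p exp c`, so `γ (∫_B M) / p ≤ c` (`mul_setIntegral_iSup_div_le`). Using the
tangent line at this point replaces Jensen's inequality. Choosing `γ` well turns the family of bounds
`γ A ≤ L + γ² ε² / 2` into `A ≤ ε √(2 L)` (`le_mul_sqrt_of_forall_mul_le`). The second inequality is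
subadditivity of the square root.
-/

open MeasureTheory ProbabilityTheory

/-- Optimization over `γ` of the exponential-moment bound. -/
theorem le_mul_sqrt_of_forall_mul_le {A L ε : ℝ} (hε : 0 ≤ ε) (hL : 0 ≤ L)
    (h : ∀ γ : ℝ, 0 < γ → γ * A ≤ L + γ ^ 2 * ε ^ 2 / 2) :
    A ≤ ε * Real.sqrt (2 * L) := by
  rcases le_or_gt A 0 with hA | hA
  · exact hA.trans (by positivity)
  rcases hε.eq_or_lt with rfl | hε'
  -- For `ε = 0` the bound `γ A ≤ L` fails for large `γ`.
  · have h1 := h ((L + 1) / A) (by positivity)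
    rw [div_mul_cancel₀ _ hA.ne'] at h1
    linarith
  -- The choice `γ = A / ε²` also covers `L = 0`, where the minimizer `√(2 L) / ε` degenerates.
  · have h1 := h (A / ε ^ 2) (by positivity)
    have h2 : A ^ 2 / ε ^ 2 ≤ 2 * L := by
      have e1 : A / ε ^ 2 * A = A ^ 2 / ε ^ 2 := by ring
      have e2 : (A / ε ^ 2) ^ 2 * ε ^ 2 / 2 = A ^ 2 / ε ^ 2 / 2 := by field_simp
      rw [e1, e2] at h1
      linarith
    rw [← div_le_iff₀' hε']
    exact Real.le_sqrt_of_sq_le (by rwa [div_pow])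

/-- The bound on `∫_B sup_i Z_i` for a fixed `γ`. No integrability of the supremum is assumed: without
it the integral is `0` by convention and the right side is nonnegative. -/
theorem mul_setIntegral_iSup_div_le {Ω : Type*} [MeasurableSpace Ω] (P : Measure Ω)
    [IsProbabilityMeasure P] {I : Type*} [Fintype I] [Nonempty I] (Z : I → Ω → ℝ) {γ v : ℝ}
    (hv : 0 ≤ v)
    (hint : ∀ i, Integrable (fun ω => Real.exp (γ * Z i ω)) P)
    (hlog : ∀ i, Real.log (∫ ω, Real.exp (γ * Z i ω) ∂P) ≤ v)
    (B : Set Ω) (hp : 0 < (P B).toReal)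
    (hL : 0 ≤ Real.log ((Fintype.card I : ℝ) / (P B).toReal)) :
    γ * ((∫ ω in B, (⨆ i, Z i ω) ∂P) / (P B).toReal)
      ≤ Real.log ((Fintype.card I : ℝ) / (P B).toReal) + v := by
  have hN : (0 : ℝ) < Fintype.card I := by exact_mod_cast Fintype.card_pos
  by_cases hM : Integrable (fun ω => ⨆ i, Z i ω) (P.restrict B)
  swap
  · rw [integral_undef hM]
    simpa using add_nonneg hL hv
  set p := (P B).toReal with hp_def
  set c := Real.log ((Fintype.card I : ℝ) / p) + v with hc
  have hexpc : p * Real.exp c = Fintype.card I * Real.exp v := by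
    rw [hc, Real.exp_add, Real.exp_log (by positivity)]
    field_simp
  have hmom : ∀ i, ∫ ω, Real.exp (γ * Z i ω) ∂P ≤ Real.exp v := fun i =>
    (Real.log_le_iff_le_exp (integral_exp_pos (hint i))).1 (hlog i)
  have hpt : ∀ ω, Real.exp c * ((1 - c) + γ * ⨆ i, Z i ω) ≤ ∑ i, Real.exp (γ * Z i ω) := by
    intro ω
    obtain ⟨j, hj⟩ := exists_eq_ciSup_of_finite (f := fun i => Z i ω)
    rw [← hj]
    calc Real.exp c * ((1 - c) + γ * Z j ω)
        ≤ Real.exp c * Real.exp (γ * Z j ω - c) := by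
          have := Real.add_one_le_exp (γ * Z j ω - c)
          gcongr
          linarith
      _ = Real.exp (γ * Z j ω) := by rw [← Real.exp_add]; ring_nf
      _ ≤ ∑ i, Real.exp (γ * Z i ω) :=
          Finset.single_le_sum (f := fun i => Real.exp (γ * Z i ω))
            (fun i _ => (Real.exp_pos _).le) (Finset.mem_univ j)
  have hleft : ∫ ω in B, Real.exp c * ((1 - c) + γ * ⨆ i, Z i ω) ∂P
      = Real.exp c * (p * (1 - c) + γ * ∫ ω in B, (⨆ i, Z i ω) ∂P) := by
    rw [integral_const_mul, integral_add (integrable_const _) (hM.const_mul γ),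
      integral_const_mul, setIntegral_const, smul_eq_mul, measureReal_def]
  have hright : ∫ ω in B, ∑ i, Real.exp (γ * Z i ω) ∂P ≤ p * Real.exp c := by
    rw [integral_finsetSum _ fun i _ => (hint i).integrableOn, hexpc]
    calc ∑ i, ∫ ω in B, Real.exp (γ * Z i ω) ∂P
        ≤ ∑ _i : I, Real.exp v := Finset.sum_le_sum fun i _ =>
          (setIntegral_le_integral (hint i) (.of_forall fun _ => (Real.exp_pos _).le)).trans
            (hmom i)
      _ = Fintype.card I * Real.exp v := by simp
  have hmono : ∫ ω in B, Real.exp c * ((1 - c) + γ * ⨆ i, Z i ω) ∂P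
      ≤ ∫ ω in B, ∑ i, Real.exp (γ * Z i ω) ∂P :=
    integral_mono (((integrable_const _).add (hM.const_mul γ)).const_mul _)
      (integrable_finsetSum _ fun i _ => (hint i).integrableOn) hpt
  have key : p * (1 - c) + γ * ∫ ω in B, (⨆ i, Z i ω) ∂P ≤ p := by
    refine le_of_mul_le_mul_left ?_ (Real.exp_pos c)
    linarith
  rw [← mul_div_assoc, div_le_iff₀ hp]
  linarith

/-- **Lemma 3 (sub-Gaussian corollary)**: maximal inequality on an event for
sub-Gaussian variables.  If `log E[e^{γ Z_i}] ≤ γ² ε² / 2` for all `γ > 0` and all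
`i`, then for every event `B` with `P(B) > 0`,
`E[(sup_i Z_i) 1_B] / P(B) ≤ ε √(2 log(|I| / P(B)))
  ≤ ε √(2 log |I|) + ε √(2 log(1 / P(B)))`. -/
theorem stmt12 (Ω : Type) [MeasurableSpace Ω] (P : Measure Ω) [IsProbabilityMeasure P]
    (I : Type) [Fintype I] [Nonempty I]
    (Z : I → Ω → ℝ) (hZmeas : ∀ i, Measurable (Z i))
    (ε : ℝ) (hε : 0 ≤ ε)
    (hmgf : ∀ i, ∀ γ : ℝ, 0 < γ →
      Integrable (fun ω => Real.exp (γ * Z i ω)) P ∧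
        Real.log (∫ ω, Real.exp (γ * Z i ω) ∂P) ≤ γ ^ 2 * ε ^ 2 / 2)
    (B : Set Ω) (hB : MeasurableSet B) (hBpos : 0 < P B) :
    (∫ ω in B, (⨆ i, Z i ω) ∂P) / (P B).toReal
        ≤ ε * Real.sqrt (2 * Real.log ((Fintype.card I : ℝ) / (P B).toReal))
    ∧ ε * Real.sqrt (2 * Real.log ((Fintype.card I : ℝ) / (P B).toReal))
        ≤ ε * Real.sqrt (2 * Real.log (Fintype.card I))
          + ε * Real.sqrt (2 * Real.log (1 / (P B).toReal)) := by
  have hp : 0 < (P B).toReal := ENNReal.toReal_pos hBpos.ne' (measure_ne_top P B)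
  have hp1 : (P B).toReal ≤ 1 := measureReal_le_one
  have hN : (1 : ℝ) ≤ Fintype.card I := by exact_mod_cast Fintype.card_pos
  have hL : 0 ≤ Real.log ((Fintype.card I : ℝ) / (P B).toReal) :=
    Real.log_nonneg ((one_le_div hp).2 (hp1.trans hN))
  refine ⟨le_mul_sqrt_of_forall_mul_le hε hL fun γ hγ =>
    mul_setIntegral_iSup_div_le P Z (by positivity) (fun i => (hmgf i γ hγ).1)
      (fun i => (hmgf i γ hγ).2) B hp hL, ?_⟩
  rw [← mul_add, div_eq_mul_one_div, Real.log_mul (by positivity) (by positivity), mul_add]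
  gcongr
  have ha : 0 ≤ 2 * Real.log (Fintype.card I) := mul_nonneg two_pos.le (Real.log_nonneg hN)
  have hb : 0 ≤ 2 * Real.log (1 / (P B).toReal) :=
    mul_nonneg two_pos.le (Real.log_nonneg ((one_le_div hp).2 hp1))
  refine Real.sqrt_le_iff.2 ⟨by positivity, ?_⟩
  rw [add_sq, Real.sq_sqrt ha, Real.sq_sqrt hb]
  have := mul_nonneg (Real.sqrt_nonneg (2 * Real.log (Fintype.card I)))
    (Real.sqrt_nonneg (2 * Real.log (1 / (P B).toReal)))
  linarith
end

section
/- (Lemma 1, specialized to the Gaussian sequence model where the compatibility constant equals one: risk bound for the Lasso/soft-thresholding estimator.) Let p ≥ 1, ε > 0 and L > 0. Let ζ be a standard Gaussian vector N(0, I_p) on ℝ^p, let μ* ∈ ℝ^p, and set y := μ* + ε ζ. Let μ̂ be the (unique) minimizer over μ ∈ ℝ^p of ‖y − μ‖_2² + λ ‖μ‖_1 with tuning parameter λ = 3 ε √( 2 (log p + L) ). Then with probability at least 1 − e^{−L}: ‖μ̂ − μ*‖_2² ≤ inf_{μ ∈ ℝ^p} ( ‖μ − μ*‖_2² + 18 ε²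 (L + log p) ‖μ‖_0 ), where ‖μ‖_0 denotes the number of nonzero coordinates of μ. -/
/-!
The Lasso objective is separable, so `μ̂` is obtained by soft thresholding `y` at `t = λ/2`.
Put `s = λ/3 = ε √(2 (log p + L))`. On the event that every noise coordinate satisfies
`|ε ζ i| ≤ s`, the noise is below the threshold, so each `μ̂ i` lies between `0` and `μ* i`
(`sq_sub_le_sq_of_soft`), and moreover `|μ̂ i - μ* i| ≤ t + s ≤ λ` (`sq_sub_le_lam_of_soft`).
As `λ² = 18 ε² (L + log p)`, the first bound on the coordinates with `μ i = 0` and the second on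
the others give the oracle inequality.

The event has probability at least `1 - e^{-L}` by a union bound over the `p` coordinates. Its
exact constant requires the two-sided tail bound `P(|Z| > x) ≤ e^{-x²/2}` without the factor `2`
that Chernoff's bound would give; it follows by comparing the density of `N(0,1)` on `(x, ∞)` with
its translate on `(0, ∞)` (`gaussian_two_sided_tail`).
-/

open MeasureTheory ProbabilityTheory

open Set in
/-- The half-line `(x, ∞)` carries at most a fraction `e^{-x²/2}` of the mass of `(0, ∞)`, because
`(v + x)² ≥ v² + x²` for `v, x ≥ 0`. -/
lemma gaussian_Ioi_le (x : ℝ) (hx : 0 ≤ x) :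
    gaussianReal 0 1 (Ioi x) ≤ ENNReal.ofReal (Real.exp (-(x ^ 2 / 2))) *
      gaussianReal 0 1 (Ioi 0) := by
  have h1 : gaussianReal 0 1 (Ioi x) = gaussianReal (-x) 1 (Ioi 0) := by
    have h := gaussianReal_map_add_const (μ := 0) (v := 1) (-x)
    rw [zero_add] at h
    rw [← h, Measure.map_apply (by fun_prop) measurableSet_Ioi]
    congr 1
    ext u
    simp
  rw [h1, gaussianReal_apply _ one_ne_zero, gaussianReal_apply _ one_ne_zero,
    ← lintegral_const_mul _ (measurable_gaussianPDF _ _)]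
  refine setLIntegral_mono (by fun_prop) fun v hv => ?_
  rw [gaussianPDF, gaussianPDF, ← ENNReal.ofReal_mul (Real.exp_pos _).le]
  refine ENNReal.ofReal_le_ofReal ?_
  rw [gaussianPDFReal, gaussianPDFReal, mul_left_comm, ← Real.exp_add]
  refine mul_le_mul_of_nonneg_left (Real.exp_le_exp.2 ?_) (by positivity)
  have hv' : (0 : ℝ) < v := hv
  have := mul_nonneg hv'.le hx
  simp only [NNReal.coe_one]
  nlinarith

open Set in
lemma gaussian_two_sided_tail (x : ℝ) (hx : 0 ≤ x) :
    gaussianReal 0 1 {z | x < |z|} ≤ ENNReal.ofReal (Real.exp (-(x ^ 2 / 2))) := by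
  have hneg : ∀ a : ℝ, gaussianReal 0 1 (Iio (-a)) = gaussianReal 0 1 (Ioi a) := by
    intro a
    have h := gaussianReal_map_neg (μ := 0) (v := 1)
    rw [neg_zero] at h
    conv_rhs => rw [← h, Measure.map_apply (by fun_prop) measurableSet_Ioi]
    congr 1
    ext u
    simp
  have hset : {z : ℝ | x < |z|} = Ioi x ∪ Iio (-x) := by
    ext z
    simp [lt_abs, lt_neg]
  have hhalf : gaussianReal 0 1 (Ioi 0) + gaussianReal 0 1 (Iio 0) ≤ 1 := by
    rw [← measure_union (by
      rw [Set.disjoint_left]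
      exact fun u hu hu' => lt_asymm (mem_Ioi.1 hu) (mem_Iio.1 hu')) measurableSet_Iio]
    exact prob_le_one
  have h0 := hneg 0
  rw [neg_zero] at h0
  calc gaussianReal 0 1 {z | x < |z|}
      ≤ gaussianReal 0 1 (Ioi x) + gaussianReal 0 1 (Iio (-x)) := hset ▸ measure_union_le _ _
    _ = gaussianReal 0 1 (Ioi x) + gaussianReal 0 1 (Ioi x) := by rw [hneg]
    _ ≤ ENNReal.ofReal (Real.exp (-(x ^ 2 / 2))) *
          (gaussianReal 0 1 (Ioi 0) + gaussianReal 0 1 (Iio 0)) := by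
        rw [h0, mul_add]
        exact add_le_add (gaussian_Ioi_le x hx) (gaussian_Ioi_le x hx)
    _ ≤ _ := mul_le_of_le_one_right' hhalf

/-- A minimizer of `u ↦ (y - u)² + 2 t |u|` is the soft thresholding of `y` at level `t`. -/
lemma eq_soft (y t h : ℝ) (ht : 0 ≤ t)
    (hmin : ∀ u : ℝ, (y - h) ^ 2 + 2 * t * |h| ≤ (y - u) ^ 2 + 2 * t * |u|) :
    (t < y ∧ h = y - t) ∨ (y < -t ∧ h = y + t) ∨ (|y| ≤ t ∧ h = 0) := by
  -- In each case the soft-thresholded value is the competitor; the objective exceeds its value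
  -- there by at least the squared distance, which must therefore vanish.
  rcases lt_or_ge t y with hy | hy
  · refine Or.inl ⟨hy, ?_⟩
    have h1 := hmin (y - t)
    rw [abs_of_pos (sub_pos.2 hy)] at h1
    have h2 := mul_le_mul_of_nonneg_left (le_abs_self h) ht
    have h3 : (y - t - h) ^ 2 ≤ 0 := by nlinarith
    have := pow_eq_zero_iff two_ne_zero |>.1 (le_antisymm h3 (sq_nonneg _))
    linarith
  rcases lt_or_ge y (-t) with hy' | hy'
  · refine Or.inr (Or.inl ⟨hy', ?_⟩)
    have h1 := hmin (y + t)
    rw [abs_of_neg (by linarith : y + t < 0)] at h1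
    have h2 := mul_le_mul_of_nonneg_left (neg_le_abs h) ht
    have h3 : (y + t - h) ^ 2 ≤ 0 := by nlinarith
    have := pow_eq_zero_iff two_ne_zero |>.1 (le_antisymm h3 (sq_nonneg _))
    linarith
  · have hyt : |y| ≤ t := abs_le.2 ⟨hy', hy⟩
    refine Or.inr (Or.inr ⟨hyt, ?_⟩)
    have h1 := hmin 0
    rw [abs_zero] at h1
    have h2 := mul_le_mul_of_nonneg_right hyt (abs_nonneg h)
    have h4 : y * h ≤ |y| * |h| := abs_mul y h ▸ le_abs_self _
    have h3 : h ^ 2 ≤ 0 := by nlinarith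
    exact pow_eq_zero_iff two_ne_zero |>.1 (le_antisymm h3 (sq_nonneg _))

/-- When the noise `y - m` does not exceed the threshold, soft thresholding moves `y` to a
point between `0` and `m`, which is at least as close to `m` as `0` is. -/
lemma sq_sub_le_sq_of_soft (y t h m : ℝ) (hn : |y - m| ≤ t)
    (hs : (t < y ∧ h = y - t) ∨ (y < -t ∧ h = y + t) ∨ (|y| ≤ t ∧ h = 0)) :
    (h - m) ^ 2 ≤ (0 - m) ^ 2 := by
  obtain ⟨hl, hr⟩ := abs_le.1 hn
  rcases hs with ⟨_, rfl⟩ | ⟨_, rfl⟩ | ⟨_, rfl⟩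
  · nlinarith
  · nlinarith
  · exact le_rfl

lemma sq_sub_le_lam_of_soft (y t h m s : ℝ) (hn : |y - m| ≤ s)
    (hs : (t < y ∧ h = y - t) ∨ (y < -t ∧ h = y + t) ∨ (|y| ≤ t ∧ h = 0)) (ht : 0 ≤ t) :
    (h - m) ^ 2 ≤ (t + s) ^ 2 := by
  obtain ⟨hl, hr⟩ := abs_le.1 hn
  refine sq_le_sq' ?_ ?_ <;> rcases hs with ⟨_, rfl⟩ | ⟨_, rfl⟩ | ⟨hy, rfl⟩
  all_goals try linarith
  all_goals linarith [abs_le.1 hy]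

/-- Coordinatewise minimality of a minimizer of the separable Lasso objective, obtained by varying
a single coordinate. -/
lemma coord_min {p : ℕ} (y h : Fin p → ℝ) (lam : ℝ)
    (hmin : ∀ μ : Fin p → ℝ, (∑ i, (y i - h i) ^ 2) + lam * ∑ i, |h i|
      ≤ (∑ i, (y i - μ i) ^ 2) + lam * ∑ i, |μ i|) (i : Fin p) (u : ℝ) :
    (y i - h i) ^ 2 + lam * |h i| ≤ (y i - u) ^ 2 + lam * |u| := by
  have h1 := hmin (Function.update h i u)
  simp only [Finset.mul_sum, ← Finset.sum_add_distrib] at h1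
  rw [← Finset.add_sum_erase _ _ (Finset.mem_univ i),
    ← Finset.add_sum_erase Finset.univ (fun j => (y j - Function.update h i u j) ^ 2 +
      lam * |Function.update h i u j|) (Finset.mem_univ i)] at h1
  have h2 : ∑ j ∈ Finset.univ.erase i, ((y j - Function.update h i u j) ^ 2 +
      lam * |Function.update h i u j|) =
      ∑ j ∈ Finset.univ.erase i, ((y j - h j) ^ 2 + lam * |h j|) := by
    refine Finset.sum_congr rfl fun j hj => ?_
    rw [Function.update_of_ne (Finset.ne_of_mem_erase hj)]
  rw [h2, Function.update_self] at h1
  linarith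

open scoped Classical in
/-- **Lemma 1**, specialized to the Gaussian sequence model (where the compatibility
constant equals one): risk bound for the Lasso / soft-thresholding estimator.
Observations `y = μ* + ε ζ` with `ζ` standard Gaussian on `ℝ^p`; `μ̂` minimizes
`‖y - μ‖₂² + λ ‖μ‖₁` with `λ = 3 ε √(2(log p + L))`.  Then with probability at least
`1 - e^{-L}`, `‖μ̂ - μ*‖₂² ≤ inf_μ (‖μ - μ*‖₂² + 18 ε² (L + log p) ‖μ‖₀)` (the
infimum is expressed by universal quantification inside the event). -/
theorem stmt14 (p : ℕ) (hp : 1 ≤ p) (ε L : ℝ) (hε : 0 < ε) (hL : 0 < L)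
    (Ω : Type) [MeasurableSpace Ω] (P : Measure Ω) [IsProbabilityMeasure P]
    (ζ : Ω → Fin p → ℝ) (hmeas : Measurable ζ)
    (hgauss : Measure.map ζ P = Measure.pi fun _ => gaussianReal 0 1)
    (μstar : Fin p → ℝ) (lam : ℝ)
    (hlam : lam = 3 * ε * Real.sqrt (2 * (Real.log p + L)))
    (μhat : Ω → Fin p → ℝ) (hmeashat : Measurable μhat)
    -- `μ̂` minimizes `‖y - μ‖₂² + λ‖μ‖₁` where `y = μ* + ε ζ`
    (hmin : ∀ ω (μ : Fin p → ℝ),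
      (∑ i, (μstar i + ε * ζ ω i - μhat ω i) ^ 2) + lam * ∑ i, |μhat ω i|
        ≤ (∑ i, (μstar i + ε * ζ ω i - μ i) ^ 2) + lam * ∑ i, |μ i|) :
    ENNReal.ofReal (1 - Real.exp (-L))
      ≤ P {ω | ∀ μ : Fin p → ℝ,
          (∑ i, (μhat ω i - μstar i) ^ 2)
            ≤ (∑ i, (μ i - μstar i) ^ 2)
              + 18 * ε ^ 2 * (L + Real.log p)
                * ((Finset.univ.filter fun i => μ i ≠ 0).card : ℝ)} := by
  set q : ℝ := 2 * (Real.log p + L) with hq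
  have hp0 : (0 : ℝ) < p := by exact_mod_cast hp
  have hlogp : 0 ≤ Real.log p := Real.log_nonneg (by exact_mod_cast hp)
  have hq0 : 0 ≤ q := by positivity
  have hsq : Real.sqrt q ^ 2 = q := Real.sq_sqrt hq0
  have hs0 : 0 ≤ Real.sqrt q := Real.sqrt_nonneg q
  have hes : 0 ≤ ε * Real.sqrt q := by positivity
  -- The bad events, whose union is the complement of the event of small noise.
  let B : Fin p → Set Ω := fun i => {ω | Real.sqrt q < |ζ ω i|}
  have hBmeas : ∀ i, MeasurableSet (B i) := fun i =>
    measurableSet_lt measurable_const ((measurable_pi_apply i).comp hmeas).abs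
  have hB : ∀ i, P (B i) ≤ ENNReal.ofReal (Real.exp (-(q / 2))) := by
    intro i
    have hmap : Measure.map (fun ω => ζ ω i) P = gaussianReal 0 1 := by
      have h1 := (measurePreserving_eval (fun _ : Fin p => gaussianReal 0 1) i).map_eq
      rw [← hgauss, Measure.map_map (measurable_pi_apply i) hmeas] at h1
      exact h1
    have h2 := gaussian_two_sided_tail (Real.sqrt q) hs0
    rw [hsq, ← hmap, Measure.map_apply (f := fun ω => ζ ω i)
      ((measurable_pi_apply i).comp hmeas)
      (measurableSet_lt measurable_const measurable_id.abs :
        MeasurableSet {z : ℝ | Real.sqrt q < |z|})] at h2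
    exact h2
  have hU : P (⋃ i, B i) ≤ ENNReal.ofReal (Real.exp (-L)) := by
    calc P (⋃ i, B i) ≤ ∑ i, P (B i) := measure_iUnion_fintype_le _ _
      _ ≤ ∑ _i : Fin p, ENNReal.ofReal (Real.exp (-(q / 2))) := Finset.sum_le_sum fun i _ => hB i
      _ = ENNReal.ofReal (p * Real.exp (-(q / 2))) := by
        rw [ENNReal.ofReal_mul hp0.le]
        simp
      _ = ENNReal.ofReal (Real.exp (-L)) := by
        congr 1
        have : -(q / 2) = -Real.log p + -L := by rw [hq]; ring
        rw [this, Real.exp_add, Real.exp_neg, Real.exp_log hp0, ← mul_assoc,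
          mul_inv_cancel₀ hp0.ne', one_mul]
  have hgood : ENNReal.ofReal (1 - Real.exp (-L)) ≤ P (⋃ i, B i)ᶜ := by
    rw [prob_compl_eq_one_sub (MeasurableSet.iUnion hBmeas),
      ENNReal.ofReal_sub _ (Real.exp_pos _).le, ENNReal.ofReal_one]
    exact tsub_le_tsub_left hU 1
  refine hgood.trans (measure_mono fun ω hω μ => ?_)
  have hnoise : ∀ i, |ζ ω i| ≤ Real.sqrt q := by
    intro i
    by_contra hc
    exact hω (Set.mem_iUnion.2 ⟨i, not_le.1 hc⟩)
  have hlam2 : 18 * ε ^ 2 * (L + Real.log p) = lam ^ 2 := by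
    rw [hlam, mul_pow, hsq, hq]
    ring
  rw [hlam2, Finset.card_filter, Nat.cast_sum, Finset.mul_sum, ← Finset.sum_add_distrib]
  refine Finset.sum_le_sum fun i _ => ?_
  have hni : |μstar i + ε * ζ ω i - μstar i| ≤ ε * Real.sqrt q := by
    rw [add_sub_cancel_left, abs_mul, abs_of_pos hε]
    exact mul_le_mul_of_nonneg_left (hnoise i) hε.le
  have ht : 0 ≤ lam / 2 := by rw [hlam]; positivity
  have hsoft := eq_soft (μstar i + ε * ζ ω i) (lam / 2) (μhat ω i) ht fun u => by
    rw [mul_div_cancel₀ lam two_ne_zero]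
    exact coord_min (fun i => μstar i + ε * ζ ω i) (μhat ω) lam (hmin ω) i u
  by_cases hμ : μ i = 0
  · have := sq_sub_le_sq_of_soft _ _ _ (μstar i) (hni.trans (by rw [hlam]; linarith)) hsoft
    simpa [hμ] using this
  · have h1 := sq_sub_le_lam_of_soft _ _ _ (μstar i) _ hni hsoft ht
    have h2 : (lam / 2 + ε * Real.sqrt q) ^ 2 ≤ lam ^ 2 :=
      pow_le_pow_left₀ (by positivity) (by rw [hlam]; linarith) 2
    simp only [ne_eq, hμ, not_false_eq_true, if_true, Nat.cast_one, mul_one]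
    nlinarith [sq_nonneg (μ i - μstar i)]
end
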